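/- Suppose δ'_j < 1/4. Then ‖P̂_j − P_j‖_2 ≤ 4δ'_j / (1 − 4δ'_j). In particular δ'_j < 1/8 implies ‖P̂_j − P_j‖_2 ≤ 8 δ'_j. -/

import Mathlib

open Matrix Finset

noncomputable def opNorm {d : ℕ} (A : Matrix (Fin d) (Fin d) ℝ) : ℝ :=
  ‖Matrix.toEuclideanCLM (𝕜 := ℝ) A‖

noncomputable def hsNorm {d : ℕ} (A : Matrix (Fin d) (Fin d) ℝ) : ℝ :=
  Real.sqrt (Matrix.trace (Aᵀ * A))

noncomputable def proj {d : ℕ} (u : Fin d → ℝ) : Matrix (Fin d) (Fin d) ℝ :=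
  Matrix.vecMulVec u u

/-- `|R_j|^{1/2}` : square root of the absolute value of the reduced resolvent. -/
noncomputable def sqrtAbsRes {d : ℕ} (lam : Fin d → ℝ) (u : Fin d → Fin d → ℝ)
    (j : Fin d) : Matrix (Fin d) (Fin d) ℝ :=
  ∑ k ∈ Finset.univ.filter (fun k => k ≠ j), (Real.sqrt |lam k - lam j|)⁻¹ • proj (u k)

/-- `|R_j|^{-1/2}`. -/
noncomputable def invSqrtAbsRes {d : ℕ} (lam : Fin d → ℝ) (u : Fin d → Fin d → ℝ)
    (j : Fin d) : Matrix (Fin d) (Fin d) ℝ :=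
  ∑ k ∈ Finset.univ.filter (fun k => k ≠ j), Real.sqrt |lam k - lam j| • proj (u k)

/-- the reduced resolvent `R_j`. -/
noncomputable def res {d : ℕ} (lam : Fin d → ℝ) (u : Fin d → Fin d → ℝ)
    (j : Fin d) : Matrix (Fin d) (Fin d) ℝ :=
  ∑ k ∈ Finset.univ.filter (fun k => k ≠ j), (lam k - lam j)⁻¹ • proj (u k)

/-- `δ_j`. -/
noncomputable def delta {d : ℕ} (lam : Fin d → ℝ) (u : Fin d → Fin d → ℝ) (j : Fin d)
    (gj : ℝ) (E : Matrix (Fin d) (Fin d) ℝ) : ℝ :=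
  opNorm ((sqrtAbsRes lam u j + (Real.sqrt gj)⁻¹ • proj (u j)) * E *
    (sqrtAbsRes lam u j + (Real.sqrt gj)⁻¹ • proj (u j)))

/-- `δ'_j`. -/
noncomputable def delta' {d : ℕ} (lam : Fin d → ℝ) (u : Fin d → Fin d → ℝ) (j : Fin d)
    (gj : ℝ) (E : Matrix (Fin d) (Fin d) ℝ) : ℝ :=
  max (opNorm (sqrtAbsRes lam u j * E * sqrtAbsRes lam u j))
    (max ((Real.sqrt gj)⁻¹ * hsNorm (sqrtAbsRes lam u j * E * proj (u j)))
      (gj⁻¹ * hsNorm (proj (u j) * E * proj (u j))))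

section Orthonormal

variable {d : ℕ} {u : Fin d → Fin d → ℝ}

lemma proj_mulVec (v x : Fin d → ℝ) : proj v *ᵥ x = (v ⬝ᵥ x) • v := by
  ext i
  simp [proj, vecMulVec_mulVec, mul_comm]

lemma sum_proj (hON : ∀ k l, u k ⬝ᵥ u l = if k = l then (1 : ℝ) else 0) :
    ∑ k, proj (u k) = 1 := by
  have h : Matrix.of u * (Matrix.of u)ᵀ = 1 := by
    ext k l
    simpa [Matrix.mul_apply, Matrix.one_apply, dotProduct] using hON k l
  rw [← mul_eq_one_comm.mp h]
  ext a b
  simp [Matrix.sum_apply, proj, vecMulVec_apply, Matrix.mul_apply]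

lemma dotProduct_self_eq_sum (hON : ∀ k l, u k ⬝ᵥ u l = if k = l then (1 : ℝ) else 0)
    (x : Fin d → ℝ) : x ⬝ᵥ x = ∑ k, (u k ⬝ᵥ x) ^ 2 := by
  have h : x ⬝ᵥ ((∑ k, proj (u k)) *ᵥ x) = x ⬝ᵥ x := by rw [sum_proj hON, Matrix.one_mulVec]
  rw [← h, Matrix.sum_mulVec, dotProduct_sum]
  refine Finset.sum_congr rfl fun k _ => ?_
  rw [proj_mulVec, dotProduct_smul, dotProduct_comm x, smul_eq_mul, pow_two]

lemma eq_of_dotProduct_eq (hON : ∀ k l, u k ⬝ᵥ u l = if k = l then (1 : ℝ) else 0)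
    {x y : Fin d → ℝ} (h : ∀ k, u k ⬝ᵥ x = u k ⬝ᵥ y) : x = y := by
  rw [← sub_eq_zero, ← dotProduct_self_eq_zero, dotProduct_self_eq_sum hON]
  simp [dotProduct_sub, h]

lemma dotProduct_sum_smul_proj_mulVec
    (hON : ∀ k l, u k ⬝ᵥ u l = if k = l then (1 : ℝ) else 0)
    (s : Finset (Fin d)) (c : Fin d → ℝ) (l : Fin d) (x : Fin d → ℝ) :
    u l ⬝ᵥ ((∑ k ∈ s, c k • proj (u k)) *ᵥ x) = if l ∈ s then c l * (u l ⬝ᵥ x) else 0 := by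
  simp [Matrix.sum_mulVec, Matrix.smul_mulVec, proj_mulVec, dotProduct_sum, hON]

lemma dotProduct_spectral_mulVec_self (c : Fin d → ℝ) (x : Fin d → ℝ) :
    x ⬝ᵥ ((∑ k, c k • proj (u k)) *ᵥ x) = ∑ k, c k * (u k ⬝ᵥ x) ^ 2 := by
  rw [Matrix.sum_mulVec, dotProduct_sum]
  refine Finset.sum_congr rfl fun k _ => ?_
  rw [Matrix.smul_mulVec, proj_mulVec, dotProduct_smul, dotProduct_smul, dotProduct_comm x,
    smul_eq_mul, smul_eq_mul, pow_two]

lemma transpose_sum_smul_proj (s : Finset (Fin d)) (c : Fin d → ℝ) :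
    (∑ k ∈ s, c k • proj (u k))ᵀ = ∑ k ∈ s, c k • proj (u k) := by
  simp [Matrix.transpose_sum, proj, transpose_vecMulVec]

end Orthonormal

section Norms

variable {d : ℕ}

lemma dotProduct_self_eq_norm_sq (x : Fin d → ℝ) : x ⬝ᵥ x = ‖WithLp.toLp 2 x‖ ^ 2 := by
  rw [EuclideanSpace.norm_sq_eq]
  simp [dotProduct, pow_two]

lemma abs_dotProduct_le (x y : Fin d → ℝ) :
    |x ⬝ᵥ y| ≤ ‖WithLp.toLp 2 x‖ * ‖WithLp.toLp 2 y‖ := by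
  have h := abs_real_inner_le_norm (WithLp.toLp 2 x) (WithLp.toLp 2 y)
  rwa [EuclideanSpace.inner_toLp_toLp, star_trivial, dotProduct_comm] at h

lemma norm_mulVec_le (A : Matrix (Fin d) (Fin d) ℝ) (x : Fin d → ℝ) :
    ‖WithLp.toLp 2 (A *ᵥ x)‖ ≤ opNorm A * ‖WithLp.toLp 2 x‖ := by
  simpa [opNorm] using (Matrix.toEuclideanCLM (𝕜 := ℝ) A).le_opNorm (WithLp.toLp 2 x)

lemma hsNorm_mul_proj (A : Matrix (Fin d) (Fin d) ℝ) {v : Fin d → ℝ} (hv : v ⬝ᵥ v = 1) :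
    hsNorm (A * proj v) = ‖WithLp.toLp 2 (A *ᵥ v)‖ := by
  have h : (A * proj v)ᵀ * (A * proj v) = ((A *ᵥ v) ⬝ᵥ (A *ᵥ v)) • vecMulVec v v := by
    rw [proj, mul_vecMulVec, transpose_vecMulVec, vecMulVec_mul_vecMulVec,
      vecMulVec_smul]
  rw [hsNorm, h, trace_smul, trace_vecMulVec, hv, smul_eq_mul, mul_one,
    dotProduct_self_eq_norm_sq, Real.sqrt_sq (norm_nonneg _)]

lemma hsNorm_proj_mul_mul_proj (A : Matrix (Fin d) (Fin d) ℝ) {v : Fin d → ℝ}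
    (hv : v ⬝ᵥ v = 1) : hsNorm (proj v * A * proj v) = |v ⬝ᵥ A *ᵥ v| := by
  rw [hsNorm_mul_proj _ hv, ← Matrix.mulVec_mulVec, proj_mulVec, WithLp.toLp_smul, norm_smul,
    Real.norm_eq_abs]
  have h : ‖WithLp.toLp 2 v‖ = 1 := by
    have := dotProduct_self_eq_norm_sq v
    rw [hv] at this
    nlinarith [norm_nonneg (WithLp.toLp 2 v)]
  rw [h, mul_one]

lemma hsNorm_proj_sub_proj_sq {v w : Fin d → ℝ} (hv : v ⬝ᵥ v = 1) (hw : w ⬝ᵥ w = 1) :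
    hsNorm (proj v - proj w) ^ 2 = 2 * (1 - (w ⬝ᵥ v) ^ 2) := by
  have h : trace ((proj v - proj w)ᵀ * (proj v - proj w)) = 2 * (1 - (w ⬝ᵥ v) ^ 2) := by
    simp only [proj, transpose_sub, transpose_vecMulVec, sub_mul, mul_sub,
      vecMulVec_mul_vecMulVec, trace_sub, dotProduct_smul, trace_vecMulVec, hv, hw,
      dotProduct_comm v w, smul_eq_mul]
    ring
  have hnn : 0 ≤ trace ((proj v - proj w)ᵀ * (proj v - proj w)) := by
    simpa using (Matrix.posSemidef_conjTranspose_mul_self (proj v - proj w)).trace_nonneg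
  rw [hsNorm, Real.sq_sqrt hnn, h]

end Norms

/-- `d - 1` linear conditions on `ℝ^d` have a nonzero solution. -/
lemma exists_ne_zero_forall_dotProduct_eq_zero {d : ℕ} (v : Fin d → Fin d → ℝ) (j : Fin d) :
    ∃ x : Fin d → ℝ, x ≠ 0 ∧ ∀ k, k ≠ j → v k ⬝ᵥ x = 0 := by
  set A : Matrix (Fin d) (Fin d) ℝ := Matrix.of fun k => if k = j then 0 else v k with hA
  have hdet : A.det = 0 := Matrix.det_eq_zero_of_row_eq_zero j (by simp [hA])
  obtain ⟨x, hx, hAx⟩ := Matrix.exists_mulVec_eq_zero_iff.mpr hdet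
  refine ⟨x, hx, fun k hk => ?_⟩
  have := congrFun hAx k
  simpa [hA, Matrix.mulVec, hk] using this

section Resolvent

variable {d : ℕ} {lam : Fin d → ℝ} {u : Fin d → Fin d → ℝ} {j : Fin d}

lemma dotProduct_sqrtAbsRes_mulVec
    (hON : ∀ k l, u k ⬝ᵥ u l = if k = l then (1 : ℝ) else 0) (l : Fin d) (x : Fin d → ℝ) :
    u l ⬝ᵥ (sqrtAbsRes lam u j *ᵥ x) =
      if l ≠ j then (Real.sqrt |lam l - lam j|)⁻¹ * (u l ⬝ᵥ x) else 0 := by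
  rw [sqrtAbsRes, dotProduct_sum_smul_proj_mulVec hON _ (fun k => (Real.sqrt |lam k - lam j|)⁻¹)]
  simp

lemma dotProduct_invSqrtAbsRes_mulVec
    (hON : ∀ k l, u k ⬝ᵥ u l = if k = l then (1 : ℝ) else 0) (l : Fin d) (x : Fin d → ℝ) :
    u l ⬝ᵥ (invSqrtAbsRes lam u j *ᵥ x) =
      if l ≠ j then Real.sqrt |lam l - lam j| * (u l ⬝ᵥ x) else 0 := by
  rw [invSqrtAbsRes, dotProduct_sum_smul_proj_mulVec hON _ (fun k => Real.sqrt |lam k - lam j|)]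
  simp

/-- Every vector is recovered from its image under `|R_j|^{-1/2}` and its `u_j`-component. -/
lemma eq_sqrtAbsRes_mulVec_add (hON : ∀ k l, u k ⬝ᵥ u l = if k = l then (1 : ℝ) else 0)
    (hne : ∀ k, k ≠ j → 0 < |lam k - lam j|) (x : Fin d → ℝ) :
    x = sqrtAbsRes lam u j *ᵥ (invSqrtAbsRes lam u j *ᵥ x) + (u j ⬝ᵥ x) • u j := by
  refine eq_of_dotProduct_eq hON fun k => ?_
  rw [dotProduct_add, dotProduct_sqrtAbsRes_mulVec hON, dotProduct_invSqrtAbsRes_mulVec hON,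
    dotProduct_smul, hON]
  by_cases hk : k = j
  · simp [hk]
  · have := (Real.sqrt_pos.mpr (hne k hk)).ne'
    simp [hk, this]

lemma norm_invSqrtAbsRes_mulVec_sq
    (hON : ∀ k l, u k ⬝ᵥ u l = if k = l then (1 : ℝ) else 0) (x : Fin d → ℝ) :
    ‖WithLp.toLp 2 (invSqrtAbsRes lam u j *ᵥ x)‖ ^ 2 =
      ∑ k, |lam k - lam j| * (u k ⬝ᵥ x) ^ 2 := by
  rw [← dotProduct_self_eq_norm_sq, dotProduct_self_eq_sum hON]
  refine Finset.sum_congr rfl fun k _ => ?_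
  rw [dotProduct_invSqrtAbsRes_mulVec hON]
  by_cases hk : k = j
  · simp [hk]
  · simp [hk, mul_pow]

variable {E : Matrix (Fin d) (Fin d) ℝ} {g : ℝ}

lemma norm_sqrtAbsRes_mul_mul_mulVec_le (y : Fin d → ℝ) :
    ‖WithLp.toLp 2 ((sqrtAbsRes lam u j * E * sqrtAbsRes lam u j) *ᵥ y)‖ ≤
      delta' lam u j g E * ‖WithLp.toLp 2 y‖ :=
  (norm_mulVec_le _ y).trans (mul_le_mul_of_nonneg_right (le_max_left _ _) (norm_nonneg _))

lemma norm_sqrtAbsRes_mul_mulVec_le (hv : u j ⬝ᵥ u j = 1) (hg : 0 < g) :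
    ‖WithLp.toLp 2 ((sqrtAbsRes lam u j * E) *ᵥ u j)‖ ≤ delta' lam u j g E * Real.sqrt g := by
  rw [← hsNorm_mul_proj _ hv, ← inv_mul_le_iff₀' (Real.sqrt_pos.mpr hg)]
  exact (le_max_left _ _).trans (le_max_right _ _)

lemma abs_dotProduct_mulVec_le (hv : u j ⬝ᵥ u j = 1) (hg : 0 < g) :
    |u j ⬝ᵥ E *ᵥ u j| ≤ delta' lam u j g E * g := by
  rw [← hsNorm_proj_mul_mul_proj _ hv, ← inv_mul_le_iff₀' hg]
  exact (le_max_right _ _).trans (le_max_right _ _)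

lemma delta'_nonneg : 0 ≤ delta' lam u j g E :=
  le_trans (norm_nonneg _) (le_max_left _ _)

/-- The perturbation is form-bounded by `2 δ'_j (|R_j|^{-1} + g_j P_j)`. -/
lemma abs_dotProduct_mulVec_self_le
    (hON : ∀ k l, u k ⬝ᵥ u l = if k = l then (1 : ℝ) else 0) (hE : E.IsSymm)
    (hne : ∀ k, k ≠ j → 0 < |lam k - lam j|) (hg : 0 < g) (x : Fin d → ℝ) :
    |x ⬝ᵥ E *ᵥ x| ≤ 2 * delta' lam u j g E *
      (∑ k, |lam k - lam j| * (u k ⬝ᵥ x) ^ 2 + g * (u j ⬝ᵥ x) ^ 2) := by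
  have hv : u j ⬝ᵥ u j = 1 := by simp [hON]
  rw [← norm_invSqrtAbsRes_mulVec_sq hON]
  set y := invSqrtAbsRes lam u j *ᵥ x with hy
  set a := u j ⬝ᵥ x with ha
  set T := sqrtAbsRes lam u j with hT
  have hTt : Tᵀ = T := transpose_sum_smul_proj _ _
  have hx : x = T *ᵥ y + a • u j := eq_sqrtAbsRes_mulVec_add hON hne x
  have hmove : ∀ v w : Fin d → ℝ, (T *ᵥ v) ⬝ᵥ w = v ⬝ᵥ (T *ᵥ w) := fun v w => by
    rw [dotProduct_mulVec v, ← mulVec_transpose, hTt]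
  have hsymm : ∀ v w : Fin d → ℝ, v ⬝ᵥ E *ᵥ w = w ⬝ᵥ E *ᵥ v := fun v w => by
    rw [dotProduct_mulVec v, ← mulVec_transpose, hE, dotProduct_comm]
  have hexp : x ⬝ᵥ E *ᵥ x = y ⬝ᵥ ((T * E * T) *ᵥ y) + 2 * a * (y ⬝ᵥ ((T * E) *ᵥ u j)) +
      a ^ 2 * (u j ⬝ᵥ E *ᵥ u j) := by
    conv_lhs => rw [hx]
    rw [mulVec_add, dotProduct_add, add_dotProduct, add_dotProduct, mulVec_smul,
      dotProduct_smul, dotProduct_smul, smul_dotProduct, smul_dotProduct, hsymm (u j), hmove,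
      hmove]
    simp only [mulVec_mulVec, smul_eq_mul, Matrix.mul_assoc]
    ring
  set δ := delta' lam u j g E with hδ
  have hδ0 : 0 ≤ δ := delta'_nonneg
  have hyy : |y ⬝ᵥ ((T * E * T) *ᵥ y)| ≤ δ * ‖WithLp.toLp 2 y‖ ^ 2 := by
    refine (abs_dotProduct_le _ _).trans ?_
    have := mul_le_mul_of_nonneg_left
      (norm_sqrtAbsRes_mul_mul_mulVec_le (lam := lam) (u := u) (j := j) (E := E) (g := g) y)
      (norm_nonneg (WithLp.toLp 2 y))
    linarith
  have hyu : |y ⬝ᵥ ((T * E) *ᵥ u j)| ≤ δ * (‖WithLp.toLp 2 y‖ * Real.sqrt g) := by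
    refine (abs_dotProduct_le _ _).trans ?_
    have := mul_le_mul_of_nonneg_left
      (norm_sqrtAbsRes_mul_mulVec_le (lam := lam) (E := E) hv hg)
      (norm_nonneg (WithLp.toLp 2 y))
    linarith
  have huu : |u j ⬝ᵥ E *ᵥ u j| ≤ δ * g := abs_dotProduct_mulVec_le hv hg
  have hcross : |2 * a * (y ⬝ᵥ ((T * E) *ᵥ u j))| ≤
      δ * (‖WithLp.toLp 2 y‖ ^ 2 + g * a ^ 2) := by
    have hsq := sq_nonneg (‖WithLp.toLp 2 y‖ - |a| * Real.sqrt g)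
    have hgg := Real.sq_sqrt hg.le
    have haa := sq_abs a
    rw [abs_mul, abs_mul, abs_two]
    calc 2 * |a| * |y ⬝ᵥ ((T * E) *ᵥ u j)|
        ≤ 2 * |a| * (δ * (‖WithLp.toLp 2 y‖ * Real.sqrt g)) := by gcongr
      _ = δ * (2 * ‖WithLp.toLp 2 y‖ * (|a| * Real.sqrt g)) := by ring
      _ ≤ δ * (‖WithLp.toLp 2 y‖ ^ 2 + (|a| * Real.sqrt g) ^ 2) := by
        gcongr
        linarith
      _ = δ * (‖WithLp.toLp 2 y‖ ^ 2 + g * a ^ 2) := by rw [mul_pow, hgg, haa]; ring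
  have hlast : |a ^ 2 * (u j ⬝ᵥ E *ᵥ u j)| ≤ a ^ 2 * (δ * g) := by
    rw [abs_mul, abs_of_nonneg (sq_nonneg a)]
    gcongr
  rw [hexp]
  refine (abs_add_three _ _ _).trans ?_
  linarith

end Resolvent

section Eigenvalues

variable {d : ℕ} {lam lamh : Fin d → ℝ} {u uh : Fin d → Fin d → ℝ} {j : Fin d}
  {E : Matrix (Fin d) (Fin d) ℝ} {g : ℝ}

/-- Relative Weyl bound: the `j`-th eigenvalue moves by at most `2 δ'_j g_j`. -/
lemma abs_eigenvalue_sub_le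
    (hON : ∀ k l, u k ⬝ᵥ u l = if k = l then (1 : ℝ) else 0) (hlam : Antitone lam)
    (hE : E.IsSymm) (hg : 0 < g) (hgap : ∀ k, k ≠ j → g ≤ |lam k - lam j|)
    (hONh : ∀ k l, uh k ⬝ᵥ uh l = if k = l then (1 : ℝ) else 0) (hlamh : Antitone lamh)
    (hdecomp : (∑ k, lam k • proj (u k)) + E = ∑ k, lamh k • proj (uh k))
    (hdelta : delta' lam u j g E < 1 / 4) :
    |lamh j - lam j| ≤ 2 * delta' lam u j g E * g := by
  have hne : ∀ k, k ≠ j → 0 < |lam k - lam j| := fun k hk => hg.trans_le (hgap k hk)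
  have hform := abs_dotProduct_mulVec_self_le hON hE hne hg
  have hδ0 : 0 ≤ delta' lam u j g E := delta'_nonneg
  set δ := delta' lam u j g E
  have hquad : ∀ x : Fin d → ℝ, ∑ k, lamh k * (uh k ⬝ᵥ x) ^ 2 =
      ∑ k, lam k * (u k ⬝ᵥ x) ^ 2 + x ⬝ᵥ E *ᵥ x := fun x => by
    rw [← dotProduct_spectral_mulVec_self, ← hdecomp, add_mulVec, dotProduct_add,
      dotProduct_spectral_mulVec_self]
  have hsplit : ∀ x : Fin d → ℝ, g * (u j ⬝ᵥ x) ^ 2 =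
      ∑ k, (if k = j then g else 0) * (u k ⬝ᵥ x) ^ 2 := fun x => by simp
  have hpos : ∀ x : Fin d → ℝ, x ≠ 0 → 0 < x ⬝ᵥ x := fun x hx =>
    (dotProduct_self_eq_norm_sq x ▸ sq_nonneg _ : 0 ≤ x ⬝ᵥ x).lt_of_ne'
      (dotProduct_self_eq_zero.not.mpr hx)
  rw [abs_le]
  constructor
  · obtain ⟨x, hx, hx0⟩ :=
      exists_ne_zero_forall_dotProduct_eq_zero (fun k => if k < j then uh k else u k) j
    have hupper : ∑ k, lamh k * (uh k ⬝ᵥ x) ^ 2 ≤ lamh j * (x ⬝ᵥ x) := by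
      rw [dotProduct_self_eq_sum hONh, Finset.mul_sum]
      refine Finset.sum_le_sum fun k _ => ?_
      rcases lt_or_ge k j with hk | hk
      · have := hx0 k hk.ne
        simp only [hk, if_true] at this
        simp [this]
      · exact mul_le_mul_of_nonneg_right (hlamh hk) (sq_nonneg _)
    have hlower : (lam j - 2 * δ * g) * (x ⬝ᵥ x) ≤ ∑ k, lam k * (u k ⬝ᵥ x) ^ 2 -
        2 * δ * (∑ k, |lam k - lam j| * (u k ⬝ᵥ x) ^ 2 + g * (u j ⬝ᵥ x) ^ 2) := by
      rw [dotProduct_self_eq_sum hON, hsplit, ← Finset.sum_add_distrib, Finset.mul_sum,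
        Finset.mul_sum, ← Finset.sum_sub_distrib]
      refine Finset.sum_le_sum fun k _ => ?_
      rcases lt_trichotomy k j with hk | rfl | hk
      · have h := hlam hk.le
        have hgk := mul_nonneg hδ0 hg.le
        have hco : lam j - 2 * δ * g ≤ lam k - 2 * δ * (lam k - lam j) := by nlinarith
        rw [if_neg hk.ne, abs_of_nonneg (sub_nonneg.mpr h)]
        linarith [mul_le_mul_of_nonneg_right hco (sq_nonneg (u k ⬝ᵥ x))]
      · simp only [sub_self, abs_zero, if_true]
        linarith
      · have := hx0 k hk.ne'
        simp only [hk.not_gt, if_false] at this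
        simp [this]
    have hbound := (abs_le.mp (hform x)).1
    have := le_of_mul_le_mul_right (by linarith [hquad x] :
      (lam j - 2 * δ * g) * (x ⬝ᵥ x) ≤ lamh j * (x ⬝ᵥ x)) (hpos x hx)
    linarith
  · obtain ⟨x, hx, hx0⟩ :=
      exists_ne_zero_forall_dotProduct_eq_zero (fun k => if k < j then u k else uh k) j
    have hlower : lamh j * (x ⬝ᵥ x) ≤ ∑ k, lamh k * (uh k ⬝ᵥ x) ^ 2 := by
      rw [dotProduct_self_eq_sum hONh, Finset.mul_sum]
      refine Finset.sum_le_sum fun k _ => ?_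
      rcases lt_or_ge j k with hk | hk
      · have := hx0 k hk.ne'
        simp only [hk.not_gt, if_false] at this
        simp [this]
      · exact mul_le_mul_of_nonneg_right (hlamh hk) (sq_nonneg _)
    have hupper : ∑ k, lam k * (u k ⬝ᵥ x) ^ 2 +
        2 * δ * (∑ k, |lam k - lam j| * (u k ⬝ᵥ x) ^ 2 + g * (u j ⬝ᵥ x) ^ 2) ≤
        (lam j + 2 * δ * g) * (x ⬝ᵥ x) := by
      rw [dotProduct_self_eq_sum hON, hsplit, ← Finset.sum_add_distrib, Finset.mul_sum,
        Finset.mul_sum, ← Finset.sum_add_distrib]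
      refine Finset.sum_le_sum fun k _ => ?_
      rcases lt_trichotomy k j with hk | rfl | hk
      · have := hx0 k hk.ne
        simp only [hk, if_true] at this
        simp [this]
      · simp only [sub_self, abs_zero, if_true]
        linarith
      · have h := hlam hk.le
        have hgk := mul_nonneg hδ0 hg.le
        have hco : lam k + 2 * δ * (lam j - lam k) ≤ lam j + 2 * δ * g := by nlinarith
        rw [if_neg hk.ne', abs_sub_comm, abs_of_nonneg (sub_nonneg.mpr h)]
        linarith [mul_le_mul_of_nonneg_right hco (sq_nonneg (u k ⬝ᵥ x))]
    have hbound := (abs_le.mp (hform x)).2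
    have := le_of_mul_le_mul_right (by linarith [hquad x] :
      lamh j * (x ⬝ᵥ x) ≤ (lam j + 2 * δ * g) * (x ⬝ᵥ x)) (hpos x hx)
    linarith

/-- A unit eigenvector of `Σ + E` whose eigenvalue is within `2 δ'_j g_j` of `λ_j` has a small
component off `u_j`, measured in the `|R_j|^{-1/2}`-weighted norm. -/
lemma norm_invSqrtAbsRes_mulVec_eigenvector_le
    (hON : ∀ k l, u k ⬝ᵥ u l = if k = l then (1 : ℝ) else 0)
    (hg : 0 < g) (hgap : ∀ k, k ≠ j → g ≤ |lam k - lam j|)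
    {v : Fin d → ℝ} {μ : ℝ} (hv : v ⬝ᵥ v = 1)
    (heig : ((∑ k, lam k • proj (u k)) + E) *ᵥ v = μ • v)
    (hμ : |μ - lam j| ≤ 2 * delta' lam u j g E * g) (hdelta : delta' lam u j g E < 1 / 4) :
    (1 - 3 * delta' lam u j g E) * ‖WithLp.toLp 2 (invSqrtAbsRes lam u j *ᵥ v)‖ ≤
      delta' lam u j g E * Real.sqrt g := by
  have hne : ∀ k, k ≠ j → 0 < |lam k - lam j| := fun k hk => hg.trans_le (hgap k hk)
  have hu : u j ⬝ᵥ u j = 1 := by simp [hON]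
  have hTy := norm_sqrtAbsRes_mul_mul_mulVec_le (lam := lam) (u := u) (j := j) (E := E) (g := g)
    (invSqrtAbsRes lam u j *ᵥ v)
  have hTu := norm_sqrtAbsRes_mul_mulVec_le (lam := lam) (E := E) hu hg
  have hδ0 : 0 ≤ delta' lam u j g E := delta'_nonneg
  set δ := delta' lam u j g E
  set y := invSqrtAbsRes lam u j *ᵥ v with hy
  set T := sqrtAbsRes lam u j with hT
  set c := u j ⬝ᵥ v with hc
  have hcoord : ∀ k, u k ⬝ᵥ E *ᵥ v = (μ - lam k) * (u k ⬝ᵥ v) := fun k => by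
    have h := congrArg (fun w => u k ⬝ᵥ w) heig
    simp only [add_mulVec, dotProduct_add, dotProduct_smul, smul_eq_mul,
      dotProduct_sum_smul_proj_mulVec hON, Finset.mem_univ, if_true] at h
    linarith
  have hc1 : |c| ≤ 1 := by
    have h := Finset.single_le_sum (f := fun k => (u k ⬝ᵥ v) ^ 2) (fun k _ => sq_nonneg _)
      (Finset.mem_univ j)
    rw [← dotProduct_self_eq_sum hON, hv] at h
    exact (sq_le_one_iff_abs_le_one _).mp h
  have hz : (T * E) *ᵥ v = (T * E * T) *ᵥ y + c • ((T * E) *ᵥ u j) := by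
    conv_lhs => rw [eq_sqrtAbsRes_mulVec_add hON hne v]
    rw [mulVec_add, mulVec_smul, mulVec_mulVec]
  have hupper : ‖WithLp.toLp 2 ((T * E) *ᵥ v)‖ ≤ δ * ‖WithLp.toLp 2 y‖ + δ * Real.sqrt g := by
    rw [hz, WithLp.toLp_add, WithLp.toLp_smul]
    refine (norm_add_le _ _).trans (add_le_add hTy ?_)
    rw [norm_smul, Real.norm_eq_abs]
    exact (mul_le_of_le_one_left (norm_nonneg _) hc1).trans hTu
  have hlower : (1 - 2 * δ) * ‖WithLp.toLp 2 y‖ ≤ ‖WithLp.toLp 2 ((T * E) *ᵥ v)‖ := by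
    refine le_of_sq_le_sq ?_ (norm_nonneg _)
    rw [mul_pow, norm_invSqrtAbsRes_mulVec_sq hON, ← dotProduct_self_eq_norm_sq,
      dotProduct_self_eq_sum hON, Finset.mul_sum]
    refine Finset.sum_le_sum fun k _ => ?_
    rw [← mulVec_mulVec, dotProduct_sqrtAbsRes_mulVec hON, hcoord]
    by_cases hk : k = j
    · simp [hk]
    · rw [if_pos hk, mul_pow, mul_pow, inv_pow, Real.sq_sqrt (abs_nonneg _), ← mul_assoc,
        ← mul_assoc]
      refine mul_le_mul_of_nonneg_right ?_ (sq_nonneg _)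
      rw [inv_mul_eq_div, le_div_iff₀ (hne k hk)]
      have h1 : (1 - 2 * δ) * |lam k - lam j| ≤ |μ - lam k| := by
        have h2 := abs_sub_abs_le_abs_sub (lam k - lam j) (μ - lam j)
        rw [show lam k - lam j - (μ - lam j) = -(μ - lam k) by ring, abs_neg] at h2
        have h3 := mul_le_mul_of_nonneg_left (hgap k hk) (by linarith : 0 ≤ 2 * δ)
        linarith
      have h4 := pow_le_pow_left₀ (mul_nonneg (by linarith) (abs_nonneg _)) h1 2
      rw [sq_abs] at h4
      linarith
  linarith

end Eigenvalues

theorem stmt11 {d : ℕ} (lam : Fin d → ℝ) (u : Fin d → Fin d → ℝ)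
    (hON : ∀ k l, u k ⬝ᵥ u l = if k = l then (1 : ℝ) else 0)
    (hlam : Antitone lam)
    (E : Matrix (Fin d) (Fin d) ℝ) (hE : E.IsSymm)
    (j : Fin d) (gj : ℝ) (hgj_pos : 0 < gj)
    (hgj : IsLeast {x : ℝ | ∃ k, k ≠ j ∧ x = |lam k - lam j|} gj)
    (lamh : Fin d → ℝ) (uh : Fin d → Fin d → ℝ)
    (hONh : ∀ k l, uh k ⬝ᵥ uh l = if k = l then (1 : ℝ) else 0)
    (hlamh : Antitone lamh)
    (hdecomp : (∑ k, lam k • proj (u k)) + E = ∑ k, lamh k • proj (uh k))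
    (hdelta : delta' lam u j gj E < 1 / 4) :
    hsNorm (proj (uh j) - proj (u j)) ≤
        4 * delta' lam u j gj E / (1 - 4 * delta' lam u j gj E) ∧
      (delta' lam u j gj E < 1 / 8 →
        hsNorm (proj (uh j) - proj (u j)) ≤ 8 * delta' lam u j gj E) := by
  have hgap : ∀ k, k ≠ j → gj ≤ |lam k - lam j| := fun k hk => hgj.2 ⟨k, hk, rfl⟩
  have hu : u j ⬝ᵥ u j = 1 := by simp [hON]
  have huh : uh j ⬝ᵥ uh j = 1 := by simp [hONh]
  have heig : ((∑ k, lam k • proj (u k)) + E) *ᵥ uh j = lamh j • uh j := by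
    rw [hdecomp]
    refine eq_of_dotProduct_eq hONh fun k => ?_
    rw [dotProduct_sum_smul_proj_mulVec hONh, dotProduct_smul, hONh]
    by_cases hk : k = j <;> simp [hk]
  have hy := norm_invSqrtAbsRes_mulVec_eigenvector_le hON hgj_pos hgap huh heig
    (abs_eigenvalue_sub_le hON hlam hE hgj_pos hgap hONh hlamh hdecomp hdelta) hdelta
  have hHS := hsNorm_proj_sub_proj_sq huh hu
  have hH0 : 0 ≤ hsNorm (proj (uh j) - proj (u j)) := Real.sqrt_nonneg _
  have hδ0 : 0 ≤ delta' lam u j gj E := delta'_nonneg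
  set H := hsNorm (proj (uh j) - proj (u j))
  set δ := delta' lam u j gj E
  have hgy : gj * (1 - (u j ⬝ᵥ uh j) ^ 2) ≤
      ‖WithLp.toLp 2 (invSqrtAbsRes lam u j *ᵥ uh j)‖ ^ 2 := by
    rw [norm_invSqrtAbsRes_mulVec_sq hON, ← huh, dotProduct_self_eq_sum hON,
      ← Finset.add_sum_erase _ _ (Finset.mem_univ j),
      ← Finset.add_sum_erase _ _ (Finset.mem_univ j), add_sub_cancel_left, sub_self, abs_zero,
      zero_mul, zero_add, Finset.mul_sum]
    exact Finset.sum_le_sum fun k hk =>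
      mul_le_mul_of_nonneg_right (hgap k (Finset.ne_of_mem_erase hk)) (sq_nonneg _)
  have hH : (1 - 3 * δ) * H ≤ 2 * δ := by
    refine le_of_sq_le_sq ?_ (by linarith)
    have h1 := pow_le_pow_left₀ (mul_nonneg (by linarith) (norm_nonneg _)) hy 2
    rw [mul_pow, mul_pow, Real.sq_sqrt hgj_pos.le] at h1
    have h2 := mul_le_mul_of_nonneg_left hgy (sq_nonneg (1 - 3 * δ))
    refine le_of_mul_le_mul_right ?_ hgj_pos
    rw [mul_pow, hHS]
    nlinarith [mul_nonneg (sq_nonneg δ) hgj_pos.le]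
  have hmain : H ≤ 4 * δ / (1 - 4 * δ) := by
    rw [le_div_iff₀ (by linarith)]
    nlinarith
  refine ⟨hmain, fun h8 => hmain.trans ?_⟩
  rw [div_le_iff₀ (by linarith)]
  nlinarith
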